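/- (Lemma 5.2, triangular structure of the structure group.) Let 0 < α ≤ 1 and k ≥ 1. Let β₁, …, β_{k+1} and γ be populated multi-indices, and let n₁, …, n_k ∈ ℕ² satisfy |n_i| < |β_i| for i = 1, …, k. Set β := β₁ + ⋯ + β_{k+1}. If the composition matrix entry (D^{(n₁)} ⋯ D^{(n_k)})_{β_{k+1}}^γ ≠ 0, then γ ≺ β and |γ| < |β|. -/

import Mathlib

open Finsupp

noncomputable section

/-- The index set `I`: symbols `z_k` for `k : ℕ` (left summand) and `z_n` for
`n ∈ ℕ² \ {(0,0)}` (right summand). -/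
abbrev RSIdx : Type := ℕ ⊕ {n : ℕ × ℕ // n ≠ (0, 0)}

/-- Multi-indices: finitely supported functions from the index set to `ℕ`. -/
abbrev MIdx : Type := RSIdx →₀ ℕ

/-- The unit multi-index `e_k`. -/
def eK (k : ℕ) : MIdx := Finsupp.single (Sum.inl k) 1

/-- The unit multi-index `e_n` for `n ≠ (0,0)`. -/
def eN (n : {n : ℕ × ℕ // n ≠ (0, 0)}) : MIdx := Finsupp.single (Sum.inr n) 1

/-- The scaled length `[β] = Σ_k k·β(k) − Σ_{n≠(0,0)} β(n)`. -/
def slen (β : MIdx) : ℤ :=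
  β.sum fun i m =>
    match i with
    | Sum.inl k => (k : ℤ) * (m : ℤ)
    | Sum.inr _ => -(m : ℤ)

/-- The parabolic length `|n| = n₁ + 2 n₂` of `n ∈ ℕ²`. -/
def plen (n : ℕ × ℕ) : ℕ := n.1 + 2 * n.2

/-- The polynomial part `|β|_p = Σ_{n≠(0,0)} |n|·β(n)`. -/
def polyPart (β : MIdx) : ℕ :=
  β.sum fun i m =>
    match i with
    | Sum.inl _ => 0
    | Sum.inr n => plen n.val * m

/-- The homogeneity `|β| = α(1+[β]) + |β|_p`. -/
def homog (α : ℝ) (β : MIdx) : ℝ := α * (1 + (slen β : ℝ)) + (polyPart β : ℝ)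

/-- `β` is purely polynomial iff `β = e_n` for some `n ≠ (0,0)`. -/
def PurelyPoly (β : MIdx) : Prop := ∃ n, β = eN n

/-- `β` is populated iff it is purely polynomial or `[β] ≥ 0`. -/
def Populated (β : MIdx) : Prop := PurelyPoly β ∨ 0 ≤ slen β

/-- The ordinal `|β|_≺ = [β] + (1/2)|β|_p + (1/4)β(0)`. -/
def precNorm (β : MIdx) : ℝ :=
  (slen β : ℝ) + (polyPart β : ℝ) / 2 + (β (Sum.inl 0) : ℝ) / 4

open Classical in
/-- The matrix entry `(D^(0))_β^γ` of the derivation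
`D^(0) = Σ_k (k+1) z_{k+1} ∂_{z_k}`: it is `(k+1)·γ(k)` if there exists `k` with
`γ + e_{k+1} = β + e_k` (such `k` is unique), and `0` otherwise. -/
def D0 (β γ : MIdx) : ℕ :=
  if h : ∃ k : ℕ, γ + eK (k + 1) = β + eK k then
    (h.choose + 1) * γ (Sum.inl h.choose)
  else 0

open Classical in
/-- The matrix entry of `D^(n)` for `n ∈ ℕ²`, where `D^((0,0))` means `D^(0)` and,
for `n ≠ (0,0)`, `(D^(n))_β^γ = β(n) + 1` if `γ = β + e_n`, and `0` otherwise. -/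
def DMat (n : ℕ × ℕ) : MIdx → MIdx → ℕ :=
  if hn : n = (0, 0) then D0
  else fun β γ =>
    if γ = β + eN ⟨n, hn⟩ then β (Sum.inr ⟨n, hn⟩) + 1 else 0

/-- Composition of two `ℕ`-valued matrices indexed by multi-indices; the sum over the
intermediate multi-index is well-defined (by row-finiteness) as a `finsum`. -/
def matMul (A B : MIdx → MIdx → ℕ) : MIdx → MIdx → ℕ :=
  fun β γ => ∑ᶠ δ : MIdx, A β δ * B δ γ

open Classical in
/-- The identity matrix. -/
def matId : MIdx → MIdx → ℕ := fun β γ => if γ = β then 1 else 0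

/-- Composition of a list of matrices. -/
def matProd : List (MIdx → MIdx → ℕ) → MIdx → MIdx → ℕ
  | [] => matId
  | A :: l => matMul A (matProd l)

/-- The `l`-fold matrix power of `D^(0)`. -/
def D0pow : ℕ → MIdx → MIdx → ℕ
  | 0 => matId
  | l + 1 => matMul D0 (D0pow l)

/-! Both `|·|_≺` and `|·| - α` are additive in the multi-index. A nonvanishing entry `(D^(n))_β^γ`
forces `[γ] = [β] - 1`, `|γ|_p = |β|_p + |n|` and `γ(0) ≤ β(0) + 1`, so that passing from `β` to `γ`
raises `|·|_≺` by at most `|n|/2 - 3/4` and `|·| - α` by exactly `|n| - α`. By additivity it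
suffices that these increments, summed over the `nᵢ`, stay below the contribution of `β₁, …, β_k`,
and this holds term by term. For the homogeneity that is the hypothesis `|nᵢ| < |βᵢ|`. For `|·|_≺`,
`α ≤ 1` turns the hypothesis into `|nᵢ| < 1 + [βᵢ] + |βᵢ|_p`; these are integers, so
`|nᵢ| ≤ [βᵢ] + |βᵢ|_p`, and `[βᵢ] ≥ -1` gives `|nᵢ|/2 - 3/4 < [βᵢ] + |βᵢ|_p/2`. -/

lemma slen_eq_weight (β : MIdx) :
    slen β = weight (Sum.elim (fun k : ℕ => (k : ℤ)) fun _ => -1) β := by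
  rw [weight_apply, slen]
  congr! 3 with i m
  cases i <;> simp [mul_comm]

lemma polyPart_eq_weight (β : MIdx) :
    polyPart β = weight (Sum.elim (fun _ : ℕ => 0) fun n => plen n.val) β := by
  rw [weight_apply, polyPart]
  congr! 3 with i m
  cases i <;> simp [mul_comm]

lemma slen_add (β γ : MIdx) : slen (β + γ) = slen β + slen γ := by
  simp only [slen_eq_weight, map_add]

lemma polyPart_add (β γ : MIdx) : polyPart (β + γ) = polyPart β + polyPart γ := by
  simp only [polyPart_eq_weight, map_add]

lemma slen_eK (k : ℕ) : slen (eK k) = k := by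
  simp [slen_eq_weight, eK, weight_single]

lemma slen_eN (n : {n : ℕ × ℕ // n ≠ (0, 0)}) : slen (eN n) = -1 := by
  simp [slen_eq_weight, eN, weight_single]

lemma polyPart_eK (k : ℕ) : polyPart (eK k) = 0 := by
  simp [polyPart_eq_weight, eK, weight_single]

lemma polyPart_eN (n : {n : ℕ × ℕ // n ≠ (0, 0)}) : polyPart (eN n) = plen n.val := by
  simp [polyPart_eq_weight, eN, weight_single]

lemma eK_apply_le_one (k : ℕ) (i : RSIdx) : eK k i ≤ 1 := by
  rw [eK, single_apply]
  split_ifs <;> simp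

lemma eN_apply_inl (n : {n : ℕ × ℕ // n ≠ (0, 0)}) (k : ℕ) : eN n (Sum.inl k) = 0 :=
  single_eq_of_ne Sum.inl_ne_inr

lemma Populated.neg_one_le_slen {β : MIdx} (hβ : Populated β) : -1 ≤ slen β := by
  rcases hβ with ⟨n, rfl⟩ | hβ
  · rw [slen_eN]
  · lia

/-- The ordinal `|·|_≺` as an additive map on multi-indices. -/
def precNormHom : MIdx →+ ℝ :=
  AddMonoidHom.mk' precNorm fun β γ => by
    simp only [precNorm, slen_add, polyPart_add, Finsupp.add_apply]
    push_cast
    ring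

/-- The shifted homogeneity `|·| - α`, which unlike `|·|` itself is additive. -/
def shiftedHomogHom (α : ℝ) : MIdx →+ ℝ :=
  AddMonoidHom.mk' (fun β => homog α β - α) fun β γ => by
    simp only [homog, slen_add, polyPart_add]
    push_cast
    ring

lemma homog_le_homog {α α' : ℝ} (hα : α ≤ α') {β : MIdx} (hβ : -1 ≤ slen β) :
    homog α β ≤ homog α' β := by
  have hβ' : (0 : ℝ) ≤ 1 + slen β := by exact_mod_cast neg_le_iff_add_nonneg'.mp hβ
  unfold homog
  gcongr

lemma half_sub_lt_precNorm_of_lt_homog {α : ℝ} (hα : α ≤ 1) {β : MIdx} (hβ : -1 ≤ slen β) {m : ℕ}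
    (hm : m < homog α β) : (m : ℝ) / 2 - 3 / 4 < precNorm β := by
  have hm_one : (m : ℝ) < 1 * (1 + slen β) + polyPart β := hm.trans_le (homog_le_homog hα hβ)
  have hm_int : (m : ℤ) ≤ slen β + polyPart β := by
    have hm_lt : (m : ℤ) < 1 * (1 + slen β) + polyPart β := by exact_mod_cast hm_one
    lia
  have hm_le : (m : ℝ) ≤ slen β + polyPart β := by exact_mod_cast hm_int
  have hslen : (-1 : ℝ) ≤ slen β := by exact_mod_cast hβ
  have hzero : (0 : ℝ) ≤ β (Sum.inl 0) := Nat.cast_nonneg _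
  unfold precNorm
  linarith only [hm_le, hslen, hzero]

section MatrixEntry

variable {n : ℕ × ℕ} {β γ : MIdx}

lemma eq_or_eq_of_DMat_ne_zero (h : DMat n β γ ≠ 0) :
    (n = (0, 0) ∧ ∃ k, γ + eK (k + 1) = β + eK k) ∨ ∃ hn, γ = β + eN ⟨n, hn⟩ := by
  unfold DMat at h
  split_ifs at h with hn
  · exact .inl ⟨hn, by_contra fun hk => h (dif_neg hk)⟩
  · exact .inr ⟨hn, by_contra fun hγ => h (if_neg hγ)⟩

lemma slen_eq_of_DMat_ne_zero (h : DMat n β γ ≠ 0) : slen γ = slen β - 1 := by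
  obtain ⟨-, k, hk⟩ | ⟨hn, rfl⟩ := eq_or_eq_of_DMat_ne_zero h
  · have hslen := congrArg slen hk
    simp only [slen_add, slen_eK] at hslen
    lia
  · rw [slen_add, slen_eN, sub_eq_add_neg]

lemma polyPart_eq_of_DMat_ne_zero (h : DMat n β γ ≠ 0) :
    polyPart γ = polyPart β + plen n := by
  obtain ⟨rfl, k, hk⟩ | ⟨hn, rfl⟩ := eq_or_eq_of_DMat_ne_zero h
  · simpa [polyPart_add, polyPart_eK, plen] using congrArg polyPart hk
  · rw [polyPart_add, polyPart_eN]

lemma apply_inl_le_of_DMat_ne_zero (h : DMat n β γ ≠ 0) (l : ℕ) :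
    γ (Sum.inl l) ≤ β (Sum.inl l) + 1 := by
  obtain ⟨-, k, hk⟩ | ⟨hn, rfl⟩ := eq_or_eq_of_DMat_ne_zero h
  · have heval := DFunLike.congr_fun hk (Sum.inl l)
    rw [Finsupp.add_apply, Finsupp.add_apply] at heval
    have hle := eK_apply_le_one k (Sum.inl l)
    lia
  · simp [eN_apply_inl]

lemma precNorm_le_of_DMat_ne_zero (h : DMat n β γ ≠ 0) :
    precNorm γ ≤ precNorm β + ((plen n : ℝ) / 2 - 3 / 4) := by
  have hzero : (γ (Sum.inl 0) : ℝ) ≤ β (Sum.inl 0) + 1 := by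
    exact_mod_cast apply_inl_le_of_DMat_ne_zero h 0
  simp only [precNorm, slen_eq_of_DMat_ne_zero h, polyPart_eq_of_DMat_ne_zero h]
  push_cast
  linarith only [hzero]

lemma shiftedHomogHom_eq_of_DMat_ne_zero (α : ℝ) (h : DMat n β γ ≠ 0) :
    shiftedHomogHom α γ = shiftedHomogHom α β + (plen n - α) := by
  simp only [shiftedHomogHom, AddMonoidHom.mk'_apply, homog, slen_eq_of_DMat_ne_zero h,
    polyPart_eq_of_DMat_ne_zero h]
  push_cast
  ring

end MatrixEntry

lemma exists_ne_zero_of_matMul_ne_zero {A B : MIdx → MIdx → ℕ} {β γ : MIdx}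
    (h : matMul A B β γ ≠ 0) : ∃ δ, A β δ ≠ 0 ∧ B δ γ ≠ 0 := by
  by_contra! hAB
  refine h (finsum_eq_zero_of_forall_eq_zero fun δ => ?_)
  exact mul_eq_zero.mpr (or_iff_not_imp_left.mpr (hAB δ))

section Composition

variable {ι M : Type*} [AddCommMonoid M] {D : ι → MIdx → MIdx → ℕ} {c : ι → M} {γ : MIdx}

lemma le_add_sum_of_matProd_ne_zero [Preorder M] [IsOrderedAddMonoid M] {f : MIdx → M}
    (hD : ∀ i β γ, D i β γ ≠ 0 → f γ ≤ f β + c i) {L : List ι} {β : MIdx}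
    (h : matProd (L.map D) β γ ≠ 0) : f γ ≤ f β + (L.map c).sum := by
  induction L generalizing β with
  | nil =>
    have hγ : γ = β := by_contra fun hne => h (if_neg hne)
    simp [hγ]
  | cons i L ih =>
    obtain ⟨δ, hβδ, hδγ⟩ := exists_ne_zero_of_matMul_ne_zero h
    calc
      f γ ≤ f δ + (L.map c).sum := ih hδγ
      _ ≤ f β + c i + (L.map c).sum := by gcongr; exact hD i β δ hβδ
      _ = f β + ((i :: L).map c).sum := by rw [List.map_cons, List.sum_cons, add_assoc]

lemma map_lt_map_sum_of_matProd_ne_zero [PartialOrder M] [IsOrderedCancelAddMonoid M]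
    {f : MIdx →+ M} (hD : ∀ i β γ, D i β γ ≠ 0 → f γ ≤ f β + c i) {k : ℕ} (hk : 1 ≤ k)
    {βs : Fin (k + 1) → MIdx} {ns : Fin k → ι} (hc : ∀ i, c (ns i) < f (βs i.castSucc))
    (h : matProd ((List.ofFn ns).map D) (βs (Fin.last k)) γ ≠ 0) :
    f γ < f (∑ j, βs j) := by
  have hne : (Finset.univ : Finset (Fin k)).Nonempty := ⟨⟨0, hk⟩, Finset.mem_univ _⟩
  calc
    f γ ≤ f (βs (Fin.last k)) + ∑ i, c (ns i) := by
      simpa only [List.map_ofFn, List.sum_ofFn, Function.comp_apply] using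
        le_add_sum_of_matProd_ne_zero hD h
    _ < f (βs (Fin.last k)) + ∑ i : Fin k, f (βs i.castSucc) := by
      gcongr
      exact hc _
    _ = f (∑ j, βs j) := by rw [map_sum, Fin.sum_univ_castSucc, add_comm]

end Composition

theorem statement13_general {α : ℝ} (hα : α ≤ 1) {k : ℕ} (hk : 1 ≤ k)
    {βs : Fin (k + 1) → MIdx} (hβs : ∀ i : Fin k, -1 ≤ slen (βs i.castSucc)) {γ : MIdx}
    {ns : Fin k → ℕ × ℕ} (hn : ∀ i : Fin k, (plen (ns i) : ℝ) < homog α (βs i.castSucc))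
    (h : matProd ((List.ofFn ns).map DMat) (βs (Fin.last k)) γ ≠ 0) :
    precNorm γ < precNorm (∑ j, βs j) ∧ homog α γ < homog α (∑ j, βs j) := by
  constructor
  · exact map_lt_map_sum_of_matProd_ne_zero (D := DMat) (f := precNormHom)
      (fun _ _ _ hD => precNorm_le_of_DMat_ne_zero hD) hk
      (fun i => half_sub_lt_precNorm_of_lt_homog hα (hβs i) (hn i)) h
  · refine (sub_lt_sub_iff_right α).mp ?_
    exact map_lt_map_sum_of_matProd_ne_zero (D := DMat) (f := shiftedHomogHom α)
      (fun _ _ _ hD => (shiftedHomogHom_eq_of_DMat_ne_zero α hD).le) hk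
      (fun i => sub_lt_sub_right (hn i) α) h

/-- Lemma 5.2 (triangular structure of the structure group): with `0 < α ≤ 1`,
`k ≥ 1`, populated `β₁, …, β_{k+1}` and `γ`, and `n₁, …, n_k ∈ ℕ²` with
`|nᵢ| < |βᵢ|`, set `β = β₁ + ⋯ + β_{k+1}`; if
`(D^{(n₁)} ⋯ D^{(n_k)})_{β_{k+1}}^γ ≠ 0` then `γ ≺ β` and `|γ| < |β|`. -/
theorem statement13 (α : ℝ) (hα0 : 0 < α) (hα1 : α ≤ 1) (k : ℕ) (hk : 1 ≤ k)
    (βs : Fin (k + 1) → MIdx) (hpop : ∀ i, Populated (βs i))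
    (γ : MIdx) (hγpop : Populated γ)
    (ns : Fin k → ℕ × ℕ)
    (hn : ∀ i : Fin k, (plen (ns i) : ℝ) < homog α (βs i.castSucc))
    (h : matProd ((List.ofFn ns).map DMat) (βs (Fin.last k)) γ ≠ 0) :
    precNorm γ < precNorm (∑ j, βs j)
    ∧ homog α γ < homog α (∑ j, βs j) :=
  statement13_general hα1 hk (fun i => (hpop i.castSucc).neg_one_le_slen) hn h
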